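/- The pushforward along co-Kleisli (shared-randomness) composition is not functorial: there exist a Borel probability measure μ on ℝ, jointly measurable functions f, f' : ℝ × ℝ → ℝ, and a point x ∈ ℝ such that the pushforward of μ along the map ω ↦ f'(ω, f(ω, x)) is not equal to the bind of the pushforward measure (f(·,x))_*μ with the family y ↦ (f'(·,y))_*μ. -/

import Mathlib

open MeasureTheory

/-!
In the composite both maps see the same sample `ω`, whereas the bind feeds them independent samples
of `μ`. Let `f` record whether its sample lies in an event `A`, and let `f'` fire when its own
sample lies in `A` and `f` recorded a success. With a shared sample `f'` fires on `A`, with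
independent samples on `A ×ˢ A`; the two laws differ as soon as `μ A ≠ μ A * μ A`.
-/

theorem measurable_map_section {Ω α β : Type*} [MeasurableSpace Ω] [MeasurableSpace α]
    [MeasurableSpace β] (μ : Measure Ω) [SFinite μ] {g : Ω × α → β} (hg : Measurable g) :
    Measurable fun y => μ.map fun ω => g (ω, y) := by
  have hmap : (fun y => μ.map fun ω => g (ω, y)) = fun y => (μ.map fun ω => (ω, y)).map g :=
    funext fun y => (Measure.map_map hg measurable_prodMk_right).symm
  exact hmap ▸ (Measure.measurable_map g hg).comp Measurable.map_prodMk_right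

theorem bind_map_section_eq_map_prod {Ω α β : Type*} [MeasurableSpace Ω] [MeasurableSpace α]
    [MeasurableSpace β] (μ : Measure Ω) [SFinite μ] (ν : Measure α) [SFinite ν]
    {g : Ω × α → β} (hg : Measurable g) :
    ν.bind (fun y => μ.map fun ω => g (ω, y)) = (μ.prod ν).map g := by
  ext s hs
  rw [Measure.bind_apply hs (measurable_map_section μ hg).aemeasurable, Measure.map_apply hg hs,
    Measure.prod_apply_symm (hg hs)]
  exact lintegral_congr fun y => Measure.map_apply (hg.comp measurable_prodMk_right) hs

theorem map_piecewise_const_singleton {Ω β : Type*} [MeasurableSpace Ω] [MeasurableSpace β]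
    [MeasurableSingletonClass β] (μ : Measure Ω) {A : Set Ω} [DecidablePred (· ∈ A)]
    (hA : MeasurableSet A) {b b' : β} (hb : b ≠ b') :
    μ.map (A.piecewise (fun _ => b) fun _ => b') {b} = μ A := by
  rw [Measure.map_apply (measurable_const.piecewise hA measurable_const)
    (measurableSet_singleton b), Set.piecewise_preimage]
  simp [hb.symm]

theorem coKleisli_pushforward_not_functorial_general {Ω α β γ : Type*} [MeasurableSpace Ω]
    [MeasurableSpace α] [MeasurableSpace β] [MeasurableSingletonClass β] [Nontrivial β]
    [MeasurableSpace γ] [MeasurableSingletonClass γ] [Nontrivial γ] (μ : Measure Ω) [SFinite μ]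
    {A : Set Ω} (hA : MeasurableSet A) (hμA : ¬ IsIdempotentElem (μ A)) (x : α) :
    ∃ (f : Ω × α → β) (f' : Ω × β → γ), Measurable f ∧ Measurable f' ∧
      μ.map (fun ω => f' (ω, f (ω, x)))
        ≠ (μ.map fun ω => f (ω, x)).bind fun y => μ.map fun ω => f' (ω, y) := by
  classical
  obtain ⟨b, b', hb⟩ := exists_pair_ne β
  obtain ⟨c, c', hc⟩ := exists_pair_ne γ
  let X : Ω → β := A.piecewise (fun _ => b) fun _ => b'
  let f' : Ω × β → γ := (A ×ˢ {b}).piecewise (fun _ => c) fun _ => c'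
  have hX : Measurable X := measurable_const.piecewise hA measurable_const
  have hAb : MeasurableSet (A ×ˢ {b}) := hA.prod (measurableSet_singleton b)
  have hf' : Measurable f' := measurable_const.piecewise hAb measurable_const
  have hcomp : (fun ω => f' (ω, X ω)) = A.piecewise (fun _ => c) fun _ => c' := by
    ext ω
    by_cases hω : ω ∈ A <;> simp [f', X, hω]
  refine ⟨fun p => X p.1, f', hX.comp measurable_fst, hf', fun h => hμA (Eq.symm ?_)⟩
  calc μ A = μ.map (fun ω => f' (ω, X ω)) {c} := by
        rw [hcomp, map_piecewise_const_singleton μ hA hc]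
    _ = (μ.map X).bind (fun y => μ.map fun ω => f' (ω, y)) {c} := congrArg (· {c}) h
    _ = (μ.prod (μ.map X)).map f' {c} := by rw [bind_map_section_eq_map_prod μ _ hf']
    _ = (μ.prod (μ.map X)) (A ×ˢ {b}) := map_piecewise_const_singleton _ hAb hc
    _ = μ A * μ A := by rw [Measure.prod_prod, map_piecewise_const_singleton μ hA hb]

theorem not_isIdempotentElem_bernoulliMeasure_singleton {Ω : Type*} [MeasurableSpace Ω]
    [MeasurableSingletonClass Ω] {x y : Ω} (hyx : y ≠ x) {p : unitInterval} (hp₀ : p ≠ 0)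
    (hp₁ : p ≠ 1) : ¬ IsIdempotentElem (ProbabilityTheory.bernoulliMeasure x y p {x}) := by
  rw [ProbabilityTheory.bernoulliMeasure_apply_of_mem_of_notMem p (measurableSet_singleton x)
    (Set.mem_singleton x) hyx]
  intro h
  have hp : IsIdempotentElem p := Subtype.ext (by simpa using congrArg ENNReal.toReal h.eq)
  exact (IsIdempotentElem.iff_eq_zero_or_one.mp hp).elim hp₀ hp₁

/-- The pushforward along co-Kleisli (shared-randomness) composition is not functorial:
there are a Borel probability measure `μ` on `ℝ`, jointly measurable `f, f' : ℝ × ℝ → ℝ`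
and a point `x` such that the pushforward of `μ` along `ω ↦ f' (ω, f (ω, x))` differs
from the bind of `(f (·, x))_* μ` with the family `y ↦ (f' (·, y))_* μ`. -/
theorem coKleisli_pushforward_not_functorial :
    ∃ (μ : Measure ℝ), IsProbabilityMeasure μ ∧
      ∃ (f f' : ℝ × ℝ → ℝ) (x : ℝ),
        Measurable f ∧ Measurable f' ∧
        Measure.map (fun ω => f' (ω, f (ω, x))) μ
          ≠ (Measure.map (fun ω => f (ω, x)) μ).bind
              (fun y => Measure.map (fun ω => f' (ω, y)) μ) := by
  let p : unitInterval := ⟨2⁻¹, by norm_num⟩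
  have hp₀ : p ≠ 0 := by simp [p, Subtype.ext_iff]
  have hp₁ : p ≠ 1 := by norm_num [p, Subtype.ext_iff]
  obtain ⟨f, f', h⟩ :=
    coKleisli_pushforward_not_functorial_general (β := ℝ) (γ := ℝ)
      (ProbabilityTheory.bernoulliMeasure 1 0 p) (measurableSet_singleton (1 : ℝ))
      (not_isIdempotentElem_bernoulliMeasure_singleton zero_ne_one hp₀ hp₁) (0 : ℝ)
  exact ⟨ProbabilityTheory.bernoulliMeasure 1 0 p, inferInstance, f, f', 0, h⟩
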